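/- arXiv:2504.10287 — 8 statements merged into one kernel-verified Lean document; each statement's English description precedes it below -/
import Mathlib

section
/- For all finite multisets Ψ and formulas β over F_PLJ: if the sequent τ_⊔(Ψ) → τ_⊔(β), regarded (via the embedding ι_It of F_It into F_PLJ) as a sequent over F_PLJ, is derivable in G_PLJ, then Ψ → β is derivable in G_PLJ. -/
/-!
Write `f = iotaIt ∘ tauCup`. The map `f` only expands the classical connectives, and every
formula `φ` whose image is a negation `¬β` is either a negation or expands, on the left or on
the right of a sequent, by an additional rule of the calculus to a negation `¬χ` with `f χ = β`
(`exists_neg_of_tauPLJ`).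
All other outermost shapes of `f φ` determine the outermost connective of `φ`.
Hence a derivation of `f(Ψ) → f(β)` can be replayed rule by rule on the preimages, by induction on
the derivation with `Ψ` and `β` arbitrary; an additional rule is inserted wherever a
negation rule acts on the image of a classical formula. No structural rule or cut is needed, and
the additional rules never occur in the given derivation, since the image of `f` contains
no classical connective.
-/

/-- Intuitionistic propositional formulas. -/
inductive FIt : Type
  | atom : ℕ → FIt
  | bot  : FIt
  | neg  : FIt → FIt
  | and  : FIt → FIt → FIt
  | or   : FIt → FIt → FIt
  | imp  : FIt → FIt → FIt

/-- Formulas of the combined logic PLJ. -/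
inductive FPLJ : Type
  | atomIt : ℕ → FPLJ
  | atomPL : ℕ → FPLJ
  | bot    : FPLJ
  | neg    : FPLJ → FPLJ
  | and    : FPLJ → FPLJ → FPLJ
  | orIt   : FPLJ → FPLJ → FPLJ
  | impIt  : FPLJ → FPLJ → FPLJ
  | orPL   : FPLJ → FPLJ → FPLJ
  | impPL  : FPLJ → FPLJ → FPLJ

/-- Embedding of intuitionistic formulas into the combined language. -/
def iotaIt : FIt → FPLJ
  | FIt.atom i  => FPLJ.atomIt i
  | FIt.bot     => FPLJ.bot
  | FIt.neg φ   => FPLJ.neg (iotaIt φ)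
  | FIt.and φ ψ => FPLJ.and (iotaIt φ) (iotaIt ψ)
  | FIt.or φ ψ  => FPLJ.orIt (iotaIt φ) (iotaIt ψ)
  | FIt.imp φ ψ => FPLJ.impIt (iotaIt φ) (iotaIt ψ)

/-- The combining map τ_⊔ from the combined language into intuitionistic formulas. -/
def tauCup : FPLJ → FIt
  | FPLJ.atomIt i  => FIt.atom i
  | FPLJ.atomPL i  => FIt.neg (FIt.neg (FIt.atom i))
  | FPLJ.bot       => FIt.bot
  | FPLJ.neg φ     => FIt.neg (tauCup φ)
  | FPLJ.and φ ψ   => FIt.and (tauCup φ) (tauCup ψ)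
  | FPLJ.orIt φ ψ  => FIt.or (tauCup φ) (tauCup ψ)
  | FPLJ.impIt φ ψ => FIt.imp (tauCup φ) (tauCup ψ)
  | FPLJ.orPL φ ψ  => FIt.neg (FIt.and (FIt.neg (tauCup φ)) (FIt.neg (tauCup ψ)))
  | FPLJ.impPL φ ψ => FIt.neg (FIt.and (tauCup φ) (FIt.neg (tauCup ψ)))

/-- Derivability in the Gentzen calculus G_It. -/
inductive DerIt : Multiset FIt → FIt → Prop
  | ax (i : ℕ) (Γ : Multiset FIt) : DerIt (FIt.atom i ::ₘ Γ) (FIt.atom i)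
  | axBot (Γ : Multiset FIt) (β : FIt) : DerIt (FIt.bot ::ₘ Γ) β
  | lneg {Γ β₁} (β₂) : DerIt Γ β₁ → DerIt (FIt.neg β₁ ::ₘ Γ) β₂
  | rneg {Γ β} : DerIt (β ::ₘ Γ) FIt.bot → DerIt Γ (FIt.neg β)
  | land {Γ β₁ β₂ β} : DerIt (β₁ ::ₘ β₂ ::ₘ Γ) β → DerIt (FIt.and β₁ β₂ ::ₘ Γ) β
  | rand {Γ β₁ β₂} : DerIt Γ β₁ → DerIt Γ β₂ → DerIt Γ (FIt.and β₁ β₂)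
  | lor {Γ β₁ β₂ β} : DerIt (β₁ ::ₘ Γ) β → DerIt (β₂ ::ₘ Γ) β →
      DerIt (FIt.or β₁ β₂ ::ₘ Γ) β
  | ror₁ {Γ β₁} (β₂) : DerIt Γ β₁ → DerIt Γ (FIt.or β₁ β₂)
  | ror₂ {Γ β₂} (β₁) : DerIt Γ β₂ → DerIt Γ (FIt.or β₁ β₂)
  | limp {Γ β₁ β₂ β} : DerIt (FIt.imp β₁ β₂ ::ₘ Γ) β₁ → DerIt (β₂ ::ₘ Γ) β →
      DerIt (FIt.imp β₁ β₂ ::ₘ Γ) β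
  | rimp {Γ β₁ β₂} : DerIt (β₁ ::ₘ Γ) β₂ → DerIt Γ (FIt.imp β₁ β₂)

/-- Derivability in the Gentzen calculus G_PLJ for the combined logic. -/
inductive DerPLJ : Multiset FPLJ → FPLJ → Prop
  | ax (i : ℕ) (Γ : Multiset FPLJ) : DerPLJ (FPLJ.atomIt i ::ₘ Γ) (FPLJ.atomIt i)
  | axBot (Γ : Multiset FPLJ) (β : FPLJ) : DerPLJ (FPLJ.bot ::ₘ Γ) β
  | lneg {Γ β₁} (β₂) : DerPLJ Γ β₁ → DerPLJ (FPLJ.neg β₁ ::ₘ Γ) β₂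
  | rneg {Γ β} : DerPLJ (β ::ₘ Γ) FPLJ.bot → DerPLJ Γ (FPLJ.neg β)
  | land {Γ β₁ β₂ β} : DerPLJ (β₁ ::ₘ β₂ ::ₘ Γ) β → DerPLJ (FPLJ.and β₁ β₂ ::ₘ Γ) β
  | rand {Γ β₁ β₂} : DerPLJ Γ β₁ → DerPLJ Γ β₂ → DerPLJ Γ (FPLJ.and β₁ β₂)
  | lorIt {Γ β₁ β₂ β} : DerPLJ (β₁ ::ₘ Γ) β → DerPLJ (β₂ ::ₘ Γ) β →
      DerPLJ (FPLJ.orIt β₁ β₂ ::ₘ Γ) β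
  | rorIt₁ {Γ β₁} (β₂) : DerPLJ Γ β₁ → DerPLJ Γ (FPLJ.orIt β₁ β₂)
  | rorIt₂ {Γ β₂} (β₁) : DerPLJ Γ β₂ → DerPLJ Γ (FPLJ.orIt β₁ β₂)
  | limpIt {Γ β₁ β₂ β} : DerPLJ (FPLJ.impIt β₁ β₂ ::ₘ Γ) β₁ → DerPLJ (β₂ ::ₘ Γ) β →
      DerPLJ (FPLJ.impIt β₁ β₂ ::ₘ Γ) β
  | rimpIt {Γ β₁ β₂} : DerPLJ (β₁ ::ₘ Γ) β₂ → DerPLJ Γ (FPLJ.impIt β₁ β₂)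
  | lP {Γ β} (i : ℕ) :
      DerPLJ (FPLJ.neg (FPLJ.neg (FPLJ.atomIt i)) ::ₘ Γ) β →
      DerPLJ (FPLJ.atomPL i ::ₘ Γ) β
  | rP {Γ} (i : ℕ) :
      DerPLJ Γ (FPLJ.neg (FPLJ.neg (FPLJ.atomIt i))) → DerPLJ Γ (FPLJ.atomPL i)
  | lorPL {Γ β₁ β₂ β} :
      DerPLJ (FPLJ.neg (FPLJ.and (FPLJ.neg β₁) (FPLJ.neg β₂)) ::ₘ Γ) β →
      DerPLJ (FPLJ.orPL β₁ β₂ ::ₘ Γ) β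
  | rorPL {Γ β₁ β₂} :
      DerPLJ Γ (FPLJ.neg (FPLJ.and (FPLJ.neg β₁) (FPLJ.neg β₂))) →
      DerPLJ Γ (FPLJ.orPL β₁ β₂)
  | limpPL {Γ β₁ β₂ β} :
      DerPLJ (FPLJ.neg (FPLJ.and β₁ (FPLJ.neg β₂)) ::ₘ Γ) β →
      DerPLJ (FPLJ.impPL β₁ β₂ ::ₘ Γ) β
  | rimpPL {Γ β₁ β₂} :
      DerPLJ Γ (FPLJ.neg (FPLJ.and β₁ (FPLJ.neg β₂))) →
      DerPLJ Γ (FPLJ.impPL β₁ β₂)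

/-- The composite `ι_It ∘ τ_⊔`, expanding the classical connectives inside the combined
language. -/
def tauPLJ (φ : FPLJ) : FPLJ := iotaIt (tauCup φ)

/-- A formula whose translation is a negation can be introduced, on either side of a sequent,
from some negation `¬χ` with the same translation. -/
theorem exists_neg_of_tauPLJ {φ β : FPLJ} (h : tauPLJ φ = FPLJ.neg β) :
    ∃ χ, tauPLJ χ = β ∧
      (∀ Γ γ, DerPLJ (FPLJ.neg χ ::ₘ Γ) γ → DerPLJ (φ ::ₘ Γ) γ) ∧
      (∀ Γ, DerPLJ Γ (FPLJ.neg χ) → DerPLJ Γ φ) := by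
  cases φ <;> simp only [tauPLJ, tauCup, iotaIt, FPLJ.neg.injEq, reduceCtorEq] at h
  case atomPL i => exact ⟨.neg (.atomIt i), h, fun _ _ => .lP i, fun _ => .rP i⟩
  case neg φ => exact ⟨φ, h, fun _ _ d => d, fun _ d => d⟩
  case orPL φ ψ => exact ⟨.and (.neg φ) (.neg ψ), h, fun _ _ => .lorPL, fun _ => .rorPL⟩
  case impPL φ ψ => exact ⟨.and φ (.neg ψ), h, fun _ _ => .limpPL, fun _ => .rimpPL⟩

theorem eq_atomIt_of_tauPLJ {φ : FPLJ} {i : ℕ} (h : tauPLJ φ = FPLJ.atomIt i) :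
    φ = FPLJ.atomIt i := by
  cases φ <;> simp_all [tauPLJ, tauCup, iotaIt]

theorem eq_bot_of_tauPLJ {φ : FPLJ} (h : tauPLJ φ = FPLJ.bot) : φ = FPLJ.bot := by
  cases φ <;> simp_all [tauPLJ, tauCup, iotaIt]

theorem exists_and_of_tauPLJ {φ β₁ β₂ : FPLJ} (h : tauPLJ φ = FPLJ.and β₁ β₂) :
    ∃ φ₁ φ₂, φ = FPLJ.and φ₁ φ₂ ∧ tauPLJ φ₁ = β₁ ∧ tauPLJ φ₂ = β₂ := by
  cases φ <;> simp_all [tauPLJ, tauCup, iotaIt]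

theorem exists_orIt_of_tauPLJ {φ β₁ β₂ : FPLJ} (h : tauPLJ φ = FPLJ.orIt β₁ β₂) :
    ∃ φ₁ φ₂, φ = FPLJ.orIt φ₁ φ₂ ∧ tauPLJ φ₁ = β₁ ∧ tauPLJ φ₂ = β₂ := by
  cases φ <;> simp_all [tauPLJ, tauCup, iotaIt]

theorem exists_impIt_of_tauPLJ {φ β₁ β₂ : FPLJ} (h : tauPLJ φ = FPLJ.impIt β₁ β₂) :
    ∃ φ₁ φ₂, φ = FPLJ.impIt φ₁ φ₂ ∧ tauPLJ φ₁ = β₁ ∧ tauPLJ φ₂ = β₂ := by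
  cases φ <;> simp_all [tauPLJ, tauCup, iotaIt]

theorem exists_cons_of_map_tauPLJ {Ψ Γ : Multiset FPLJ} {β : FPLJ}
    (h : Ψ.map tauPLJ = β ::ₘ Γ) :
    ∃ φ Ψ', Ψ = φ ::ₘ Ψ' ∧ tauPLJ φ = β ∧ Ψ'.map tauPLJ = Γ := by
  classical
  obtain ⟨φ, hφ, h₁, h₂⟩ := (Multiset.map_eq_cons _ _ _ _).2 h
  exact ⟨φ, _, (Multiset.cons_erase hφ).symm, h₁, h₂⟩

/-- The translation reflects derivability; the sequent is a variable so that induction on the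
derivation applies to arbitrary preimages. -/
theorem DerPLJ.of_tauPLJ {Γ : Multiset FPLJ} {γ : FPLJ} (d : DerPLJ Γ γ) :
    ∀ (Ψ : Multiset FPLJ) (β : FPLJ), Ψ.map tauPLJ = Γ → tauPLJ β = γ → DerPLJ Ψ β := by
  induction d with
  | ax i Γ =>
    intro Ψ β hΨ hβ
    obtain ⟨φ, Ψ, rfl, hφ, -⟩ := exists_cons_of_map_tauPLJ hΨ
    rw [eq_atomIt_of_tauPLJ hφ, eq_atomIt_of_tauPLJ hβ]
    exact .ax i Ψ
  | axBot Γ γ =>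
    intro Ψ β hΨ _
    obtain ⟨φ, Ψ, rfl, hφ, -⟩ := exists_cons_of_map_tauPLJ hΨ
    rw [eq_bot_of_tauPLJ hφ]
    exact .axBot Ψ β
  | lneg _ _ ih =>
    intro Ψ β hΨ _
    obtain ⟨φ, Ψ, rfl, hφ, hΓ⟩ := exists_cons_of_map_tauPLJ hΨ
    obtain ⟨χ, hχ, hl, -⟩ := exists_neg_of_tauPLJ hφ
    exact hl _ _ (.lneg β (ih Ψ χ hΓ hχ))
  | rneg _ ih =>
    intro Ψ β hΨ hβ
    obtain ⟨χ, hχ, -, hr⟩ := exists_neg_of_tauPLJ hβ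
    exact hr _ (.rneg (ih (χ ::ₘ Ψ) .bot (by simp [hΨ, hχ]) rfl))
  | land _ ih =>
    intro Ψ β hΨ hβ
    obtain ⟨φ, Ψ, rfl, hφ, hΓ⟩ := exists_cons_of_map_tauPLJ hΨ
    obtain ⟨φ₁, φ₂, rfl, h₁, h₂⟩ := exists_and_of_tauPLJ hφ
    exact .land (ih _ _ (by simp [hΓ, h₁, h₂]) hβ)
  | rand _ _ ih₁ ih₂ =>
    intro Ψ β hΨ hβ
    obtain ⟨φ₁, φ₂, rfl, h₁, h₂⟩ := exists_and_of_tauPLJ hβ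
    exact .rand (ih₁ _ _ hΨ h₁) (ih₂ _ _ hΨ h₂)
  | lorIt _ _ ih₁ ih₂ =>
    intro Ψ β hΨ hβ
    obtain ⟨φ, Ψ, rfl, hφ, hΓ⟩ := exists_cons_of_map_tauPLJ hΨ
    obtain ⟨φ₁, φ₂, rfl, h₁, h₂⟩ := exists_orIt_of_tauPLJ hφ
    exact .lorIt (ih₁ _ _ (by simp [hΓ, h₁]) hβ) (ih₂ _ _ (by simp [hΓ, h₂]) hβ)
  | rorIt₁ _ _ ih =>
    intro Ψ β hΨ hβ
    obtain ⟨φ₁, φ₂, rfl, h₁, -⟩ := exists_orIt_of_tauPLJ hβ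
    exact .rorIt₁ _ (ih _ _ hΨ h₁)
  | rorIt₂ _ _ ih =>
    intro Ψ β hΨ hβ
    obtain ⟨φ₁, φ₂, rfl, -, h₂⟩ := exists_orIt_of_tauPLJ hβ
    exact .rorIt₂ _ (ih _ _ hΨ h₂)
  | limpIt _ _ ih₁ ih₂ =>
    intro Ψ β hΨ hβ
    obtain ⟨φ, Ψ, rfl, hφ, hΓ⟩ := exists_cons_of_map_tauPLJ hΨ
    obtain ⟨φ₁, φ₂, rfl, h₁, h₂⟩ := exists_impIt_of_tauPLJ hφ
    exact .limpIt (ih₁ _ _ hΨ h₁) (ih₂ _ _ (by simp [hΓ, h₂]) hβ)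
  | rimpIt _ ih =>
    intro Ψ β hΨ hβ
    obtain ⟨φ₁, φ₂, rfl, h₁, h₂⟩ := exists_impIt_of_tauPLJ hβ
    exact .rimpIt (ih _ _ (by simp [hΨ, h₁]) h₂)
  | lP _ _ _ | lorPL _ _ | limpPL _ _ =>
    intro Ψ _ hΨ _
    obtain ⟨φ, _, -, hφ, -⟩ := exists_cons_of_map_tauPLJ hΨ
    cases φ <;> simp [tauPLJ, tauCup, iotaIt] at hφ
  | rP _ _ _ | rorPL _ _ | rimpPL _ _ =>
    intro _ β _ hβ
    cases β <;> simp [tauPLJ, tauCup, iotaIt] at hβ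

theorem derPLJ_of_derPLJ_tauCup (Ψ : Multiset FPLJ) (β : FPLJ)
    (h : DerPLJ ((Ψ.map tauCup).map iotaIt) (iotaIt (tauCup β))) :
    DerPLJ Ψ β := by
  refine h.of_tauPLJ Ψ β ?_ rfl
  rw [Multiset.map_map]
  rfl
end

section
/- For all finite multisets Ψ and formulas β over F_PLJ: the sequent Ψ → β is derivable in G_PLJ if and only if the sequent τ_⊔(Ψ) → τ_⊔(β) over F_It is derivable in G_It. -/
theorem DerPLJ.to_derIt {Ψ : Multiset FPLJ} {β : FPLJ} (h : DerPLJ Ψ β) :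
    DerIt (Ψ.map tauCup) (tauCup β) := by
  induction h with
  | ax i Γ => simpa [tauCup] using DerIt.ax i _
  | axBot Γ β => simpa [tauCup] using DerIt.axBot _ _
  | lneg β₂ _ ih => simpa [tauCup] using DerIt.lneg _ ih
  | rneg _ ih => exact DerIt.rneg (by simpa [tauCup] using ih)
  | land _ ih =>
    rw [Multiset.map_cons]
    exact DerIt.land (by simpa using ih)
  | rand _ _ ih₁ ih₂ => exact DerIt.rand ih₁ ih₂
  | lorIt _ _ ih₁ ih₂ =>
    rw [Multiset.map_cons]
    exact DerIt.lor (by simpa using ih₁) (by simpa using ih₂)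
  | rorIt₁ _ _ ih => exact DerIt.ror₁ _ ih
  | rorIt₂ _ _ ih => exact DerIt.ror₂ _ ih
  | limpIt _ _ ih₁ ih₂ =>
    rw [Multiset.map_cons]
    exact DerIt.limp (by simpa [tauCup] using ih₁) (by simpa using ih₂)
  | rimpIt _ ih => exact DerIt.rimp (by simpa using ih)
  | lP i _ ih => simpa [tauCup] using ih
  | rP i _ ih => simpa [tauCup] using ih
  | lorPL _ ih => simpa [tauCup] using ih
  | rorPL _ ih => simpa [tauCup] using ih
  | limpPL _ ih => simpa [tauCup] using ih
  | rimpPL _ ih => simpa [tauCup] using ih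

/-- Every preimage of a negation under `tauCup` can be replaced by a negation, on the left and on
the right of sequents: it is one already, or a rule for a classical connective unfolds it. -/
theorem exists_neg_of_tauCup_eq_neg {φ : FPLJ} {γ : FIt} (h : tauCup φ = FIt.neg γ) :
    ∃ ψ, tauCup ψ = γ ∧
      (∀ Γ β, DerPLJ (FPLJ.neg ψ ::ₘ Γ) β → DerPLJ (φ ::ₘ Γ) β) ∧
      (∀ Γ, DerPLJ Γ (FPLJ.neg ψ) → DerPLJ Γ φ) := by
  cases φ with
  | neg φ => exact ⟨φ, FIt.neg.inj h, fun _ _ => id, fun _ => id⟩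
  | atomPL i => exact ⟨.neg (.atomIt i), FIt.neg.inj h, fun _ _ => .lP i, fun _ => .rP i⟩
  | orPL φ ψ => exact ⟨.and (.neg φ) (.neg ψ), FIt.neg.inj h, fun _ _ => .lorPL, fun _ => .rorPL⟩
  | impPL φ ψ => exact ⟨.and φ (.neg ψ), FIt.neg.inj h, fun _ _ => .limpPL, fun _ => .rimpPL⟩
  | _ => simp [tauCup] at h

theorem eq_atomIt_of_tauCup_eq_atom {φ : FPLJ} {i : ℕ} (h : tauCup φ = FIt.atom i) :
    φ = FPLJ.atomIt i := by
  cases φ <;> simp_all [tauCup]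

theorem eq_bot_of_tauCup_eq_bot {φ : FPLJ} (h : tauCup φ = FIt.bot) : φ = FPLJ.bot := by
  cases φ <;> simp_all [tauCup]

theorem exists_and_of_tauCup_eq_and {φ : FPLJ} {γ δ : FIt} (h : tauCup φ = FIt.and γ δ) :
    ∃ ψ χ, φ = FPLJ.and ψ χ ∧ tauCup ψ = γ ∧ tauCup χ = δ := by
  cases φ <;> simp_all [tauCup]

theorem exists_orIt_of_tauCup_eq_or {φ : FPLJ} {γ δ : FIt} (h : tauCup φ = FIt.or γ δ) :
    ∃ ψ χ, φ = FPLJ.orIt ψ χ ∧ tauCup ψ = γ ∧ tauCup χ = δ := by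
  cases φ <;> simp_all [tauCup]

theorem exists_impIt_of_tauCup_eq_imp {φ : FPLJ} {γ δ : FIt} (h : tauCup φ = FIt.imp γ δ) :
    ∃ ψ χ, φ = FPLJ.impIt ψ χ ∧ tauCup ψ = γ ∧ tauCup χ = δ := by
  cases φ <;> simp_all [tauCup]

theorem exists_cons_of_map_tauCup_eq_cons {Ψ : Multiset FPLJ} {γ : FIt} {Γ : Multiset FIt}
    (h : Ψ.map tauCup = γ ::ₘ Γ) :
    ∃ φ Φ, Ψ = φ ::ₘ Φ ∧ tauCup φ = γ ∧ Φ.map tauCup = Γ := by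
  classical
  obtain ⟨φ, hφ, h₁, h₂⟩ := (Multiset.map_eq_cons _ _ _ _).2 h
  exact ⟨φ, Ψ.erase φ, (Multiset.cons_erase hφ).symm, h₁, h₂⟩

/-- A derivation in G_It lifts to every sequent over the combined language that `tauCup` maps to
its end sequent. -/
theorem DerIt.lift {Γ : Multiset FIt} {γ : FIt} (h : DerIt Γ γ) :
    ∀ {Ψ : Multiset FPLJ} {β : FPLJ}, Ψ.map tauCup = Γ → tauCup β = γ → DerPLJ Ψ β := by
  induction h with
  | ax i Γ =>
    intro Ψ β hΨ hβ
    obtain ⟨φ, Φ, rfl, hφ, -⟩ := exists_cons_of_map_tauCup_eq_cons hΨ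
    obtain rfl := eq_atomIt_of_tauCup_eq_atom hφ
    obtain rfl := eq_atomIt_of_tauCup_eq_atom hβ
    exact .ax i Φ
  | axBot Γ γ =>
    intro Ψ β hΨ _
    obtain ⟨φ, Φ, rfl, hφ, -⟩ := exists_cons_of_map_tauCup_eq_cons hΨ
    obtain rfl := eq_bot_of_tauCup_eq_bot hφ
    exact .axBot Φ β
  | lneg γ₂ _ ih =>
    intro Ψ β hΨ _
    obtain ⟨φ, Φ, rfl, hφ, hΦ⟩ := exists_cons_of_map_tauCup_eq_cons hΨ
    obtain ⟨ψ, hψ, left, -⟩ := exists_neg_of_tauCup_eq_neg hφ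
    exact left _ _ (.lneg _ (ih hΦ hψ))
  | rneg _ ih =>
    intro Ψ β hΨ hβ
    obtain ⟨ψ, hψ, -, right⟩ := exists_neg_of_tauCup_eq_neg hβ
    exact right _ (.rneg (ih (by simp [hΨ, hψ]) rfl))
  | land _ ih =>
    intro Ψ β hΨ hβ
    obtain ⟨φ, Φ, rfl, hφ, hΦ⟩ := exists_cons_of_map_tauCup_eq_cons hΨ
    obtain ⟨ψ, χ, rfl, hψ, hχ⟩ := exists_and_of_tauCup_eq_and hφ
    exact .land (ih (by simp [hΦ, hψ, hχ]) hβ)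
  | rand _ _ ih₁ ih₂ =>
    intro Ψ β hΨ hβ
    obtain ⟨ψ, χ, rfl, hψ, hχ⟩ := exists_and_of_tauCup_eq_and hβ
    exact .rand (ih₁ hΨ hψ) (ih₂ hΨ hχ)
  | lor _ _ ih₁ ih₂ =>
    intro Ψ β hΨ hβ
    obtain ⟨φ, Φ, rfl, hφ, hΦ⟩ := exists_cons_of_map_tauCup_eq_cons hΨ
    obtain ⟨ψ, χ, rfl, hψ, hχ⟩ := exists_orIt_of_tauCup_eq_or hφ
    exact .lorIt (ih₁ (by simp [hΦ, hψ]) hβ) (ih₂ (by simp [hΦ, hχ]) hβ)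
  | ror₁ _ _ ih =>
    intro Ψ β hΨ hβ
    obtain ⟨ψ, χ, rfl, hψ, -⟩ := exists_orIt_of_tauCup_eq_or hβ
    exact .rorIt₁ _ (ih hΨ hψ)
  | ror₂ _ _ ih =>
    intro Ψ β hΨ hβ
    obtain ⟨ψ, χ, rfl, -, hχ⟩ := exists_orIt_of_tauCup_eq_or hβ
    exact .rorIt₂ _ (ih hΨ hχ)
  | limp _ _ ih₁ ih₂ =>
    intro Ψ β hΨ hβ
    obtain ⟨φ, Φ, rfl, hφ, hΦ⟩ := exists_cons_of_map_tauCup_eq_cons hΨ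
    obtain ⟨ψ, χ, rfl, hψ, hχ⟩ := exists_impIt_of_tauCup_eq_imp hφ
    exact .limpIt (ih₁ hΨ hψ) (ih₂ (by simp [hΦ, hχ]) hβ)
  | rimp _ ih =>
    intro Ψ β hΨ hβ
    obtain ⟨ψ, χ, rfl, hψ, hχ⟩ := exists_impIt_of_tauCup_eq_imp hβ
    exact .rimpIt (ih (by simp [hΨ, hψ]) hχ)

theorem derPLJ_iff_derIt_tauCup (Ψ : Multiset FPLJ) (β : FPLJ) :
    DerPLJ Ψ β ↔ DerIt (Ψ.map tauCup) (tauCup β) := by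
  exact ⟨DerPLJ.to_derIt, fun h => h.lift rfl rfl⟩
end

section
/- The combined logic PLJ is a conservative extension of intuitionistic logic: for every φ ∈ F_It, the sequent ∅ → ι_It(φ) is derivable in G_PLJ if and only if the sequent ∅ → φ is derivable in G_It. -/
theorem tauCup_iotaIt (φ : FIt) : tauCup (iotaIt φ) = φ := by
  induction φ <;> simp_all [iotaIt, tauCup]

theorem DerIt.map_iotaIt {Γ : Multiset FIt} {β : FIt} (h : DerIt Γ β) :
    DerPLJ (Γ.map iotaIt) (iotaIt β) := by
  induction h <;> simp only [Multiset.map_cons, iotaIt] at *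
  case ax => exact .ax _ _
  case axBot => exact .axBot _ _
  case lneg h => exact .lneg _ h
  case rneg h => exact .rneg h
  case land h => exact .land h
  case rand h₁ h₂ => exact .rand h₁ h₂
  case lor h₁ h₂ => exact .lorIt h₁ h₂
  case ror₁ h => exact .rorIt₁ _ h
  case ror₂ h => exact .rorIt₂ _ h
  case limp h₁ h₂ => exact .limpIt h₁ h₂
  case rimp h => exact .rimpIt h

theorem DerPLJ.map_tauCup {Γ : Multiset FPLJ} {β : FPLJ} (h : DerPLJ Γ β) :
    DerIt (Γ.map tauCup) (tauCup β) := by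
  induction h <;> simp only [Multiset.map_cons, tauCup] at *
  case ax => exact .ax _ _
  case axBot => exact .axBot _ _
  case lneg h => exact .lneg _ h
  case rneg h => exact .rneg h
  case land h => exact .land h
  case rand h₁ h₂ => exact .rand h₁ h₂
  case lorIt h₁ h₂ => exact .lor h₁ h₂
  case rorIt₁ h => exact .ror₁ _ h
  case rorIt₂ h => exact .ror₂ _ h
  case limpIt h₁ h₂ => exact .limp h₁ h₂
  case rimpIt h => exact .rimp h
  -- For the remaining, purely classical, rules premise and conclusion have the same translation.
  all_goals assumption

theorem PLJ_conservative_over_It (φ : FIt) :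
    DerPLJ 0 (iotaIt φ) ↔ DerIt 0 φ := by
  constructor
  · intro h
    simpa [tauCup_iotaIt] using h.map_tauCup
  · intro h
    simpa using h.map_iotaIt
end

section
/- The combined logic JS is a conservative extension of modal logic S4: for every φ ∈ F_S4, the sequent ∅ → ι_S4(φ) is derivable in G_JS if and only if the sequent ∅ → φ is derivable in G_S4. -/
/-!
The extra rules of `G_JS` merely unfold intuitionistic connectives into their Gödel translations, so
applying the Gödel translation to every formula turns a `G_JS`-derivation into a `G_S4`-derivation:
the intuitionistic rules become repetitions of their premise and every other rule becomes its `S4`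
namesake (`godel_derivable`). The translation is a left inverse of `iotaS4` (`godel_iotaS4`), which
gives conservativity. Conversely every rule of `G_S4` is a rule of `G_JS`, so `iotaS4` preserves
derivability (`iotaS4_derivable`). No cut elimination or semantics is needed.
-/

/-- Modal (S4) formulas. -/
inductive FS4 : Type
  | atom : ℕ → FS4
  | bot  : FS4
  | neg  : FS4 → FS4
  | box  : FS4 → FS4
  | dia  : FS4 → FS4
  | and  : FS4 → FS4 → FS4
  | or   : FS4 → FS4 → FS4
  | imp  : FS4 → FS4 → FS4

/-- Formulas of the combined logic JS. -/
inductive FJS : Type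
  | atomIt : ℕ → FJS
  | atomS4 : ℕ → FJS
  | bot    : FJS
  | negIt  : FJS → FJS
  | negS4  : FJS → FJS
  | box    : FJS → FJS
  | dia    : FJS → FJS
  | and    : FJS → FJS → FJS
  | or     : FJS → FJS → FJS
  | impIt  : FJS → FJS → FJS
  | impS4  : FJS → FJS → FJS

/-- Embedding of S4 formulas into the combined language. -/
def iotaS4 : FS4 → FJS
  | FS4.atom i  => FJS.atomS4 i
  | FS4.bot     => FJS.bot
  | FS4.neg φ   => FJS.negS4 (iotaS4 φ)
  | FS4.box φ   => FJS.box (iotaS4 φ)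
  | FS4.dia φ   => FJS.dia (iotaS4 φ)
  | FS4.and φ ψ => FJS.and (iotaS4 φ) (iotaS4 ψ)
  | FS4.or φ ψ  => FJS.or (iotaS4 φ) (iotaS4 ψ)
  | FS4.imp φ ψ => FJS.impS4 (iotaS4 φ) (iotaS4 ψ)

/-- Derivability in the Gentzen calculus G_S4. -/
inductive DerS4 : Multiset FS4 → Multiset FS4 → Prop
  | ax (i : ℕ) (Γ Δ : Multiset FS4) : DerS4 (FS4.atom i ::ₘ Γ) (FS4.atom i ::ₘ Δ)
  | axBot (Γ Δ : Multiset FS4) : DerS4 (FS4.bot ::ₘ Γ) Δ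
  | lneg {Γ Δ β} : DerS4 Γ (β ::ₘ Δ) → DerS4 (FS4.neg β ::ₘ Γ) Δ
  | rneg {Γ Δ β} : DerS4 (β ::ₘ Γ) Δ → DerS4 Γ (FS4.neg β ::ₘ Δ)
  | land {Γ Δ β₁ β₂} : DerS4 (β₁ ::ₘ β₂ ::ₘ Γ) Δ → DerS4 (FS4.and β₁ β₂ ::ₘ Γ) Δ
  | rand {Γ Δ β₁ β₂} : DerS4 Γ (β₁ ::ₘ Δ) → DerS4 Γ (β₂ ::ₘ Δ) →
      DerS4 Γ (FS4.and β₁ β₂ ::ₘ Δ)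
  | lor {Γ Δ β₁ β₂} : DerS4 (β₁ ::ₘ Γ) Δ → DerS4 (β₂ ::ₘ Γ) Δ →
      DerS4 (FS4.or β₁ β₂ ::ₘ Γ) Δ
  | ror {Γ Δ β₁ β₂} : DerS4 Γ (β₁ ::ₘ β₂ ::ₘ Δ) → DerS4 Γ (FS4.or β₁ β₂ ::ₘ Δ)
  | limp {Γ Δ β₁ β₂} : DerS4 Γ (β₁ ::ₘ Δ) → DerS4 (β₂ ::ₘ Γ) Δ →
      DerS4 (FS4.imp β₁ β₂ ::ₘ Γ) Δ
  | rimp {Γ Δ β₁ β₂} : DerS4 (β₁ ::ₘ Γ) (β₂ ::ₘ Δ) → DerS4 Γ (FS4.imp β₁ β₂ ::ₘ Δ)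
  | lbox {Γ Δ β} : DerS4 (β ::ₘ FS4.box β ::ₘ Γ) Δ → DerS4 (FS4.box β ::ₘ Γ) Δ
  | rbox {Γ Δ : Multiset FS4} {β : FS4} (Ω Λ : Multiset FS4) :
      DerS4 (Γ.map FS4.box) (β ::ₘ Δ.map FS4.dia) →
      DerS4 (Ω + Γ.map FS4.box) (FS4.box β ::ₘ (Δ.map FS4.dia + Λ))
  | ldia {Γ Δ : Multiset FS4} {β : FS4} (Ω Λ : Multiset FS4) :
      DerS4 (β ::ₘ Γ.map FS4.box) (Δ.map FS4.dia) →
      DerS4 (FS4.dia β ::ₘ (Ω + Γ.map FS4.box)) (Δ.map FS4.dia + Λ)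
  | rdia {Γ Δ β} : DerS4 Γ (β ::ₘ FS4.dia β ::ₘ Δ) → DerS4 Γ (FS4.dia β ::ₘ Δ)

/-- Derivability in the Gentzen calculus G_JS for the combined logic. -/
inductive DerJS : Multiset FJS → Multiset FJS → Prop
  | ax (i : ℕ) (Γ Δ : Multiset FJS) : DerJS (FJS.atomS4 i ::ₘ Γ) (FJS.atomS4 i ::ₘ Δ)
  | axBot (Γ Δ : Multiset FJS) : DerJS (FJS.bot ::ₘ Γ) Δ
  | lnegS4 {Γ Δ β} : DerJS Γ (β ::ₘ Δ) → DerJS (FJS.negS4 β ::ₘ Γ) Δ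
  | rnegS4 {Γ Δ β} : DerJS (β ::ₘ Γ) Δ → DerJS Γ (FJS.negS4 β ::ₘ Δ)
  | land {Γ Δ β₁ β₂} : DerJS (β₁ ::ₘ β₂ ::ₘ Γ) Δ → DerJS (FJS.and β₁ β₂ ::ₘ Γ) Δ
  | rand {Γ Δ β₁ β₂} : DerJS Γ (β₁ ::ₘ Δ) → DerJS Γ (β₂ ::ₘ Δ) →
      DerJS Γ (FJS.and β₁ β₂ ::ₘ Δ)
  | lor {Γ Δ β₁ β₂} : DerJS (β₁ ::ₘ Γ) Δ → DerJS (β₂ ::ₘ Γ) Δ →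
      DerJS (FJS.or β₁ β₂ ::ₘ Γ) Δ
  | ror {Γ Δ β₁ β₂} : DerJS Γ (β₁ ::ₘ β₂ ::ₘ Δ) → DerJS Γ (FJS.or β₁ β₂ ::ₘ Δ)
  | limpS4 {Γ Δ β₁ β₂} : DerJS Γ (β₁ ::ₘ Δ) → DerJS (β₂ ::ₘ Γ) Δ →
      DerJS (FJS.impS4 β₁ β₂ ::ₘ Γ) Δ
  | rimpS4 {Γ Δ β₁ β₂} : DerJS (β₁ ::ₘ Γ) (β₂ ::ₘ Δ) → DerJS Γ (FJS.impS4 β₁ β₂ ::ₘ Δ)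
  | lbox {Γ Δ β} : DerJS (β ::ₘ FJS.box β ::ₘ Γ) Δ → DerJS (FJS.box β ::ₘ Γ) Δ
  | rbox {Γ Δ : Multiset FJS} {β : FJS} (Ω Λ : Multiset FJS) :
      DerJS (Γ.map FJS.box) (β ::ₘ Δ.map FJS.dia) →
      DerJS (Ω + Γ.map FJS.box) (FJS.box β ::ₘ (Δ.map FJS.dia + Λ))
  | ldia {Γ Δ : Multiset FJS} {β : FJS} (Ω Λ : Multiset FJS) :
      DerJS (β ::ₘ Γ.map FJS.box) (Δ.map FJS.dia) →
      DerJS (FJS.dia β ::ₘ (Ω + Γ.map FJS.box)) (Δ.map FJS.dia + Λ)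
  | rdia {Γ Δ β} : DerJS Γ (β ::ₘ FJS.dia β ::ₘ Δ) → DerJS Γ (FJS.dia β ::ₘ Δ)
  | lP {Γ Δ} (i : ℕ) :
      DerJS (FJS.box (FJS.atomS4 i) ::ₘ Γ) Δ → DerJS (FJS.atomIt i ::ₘ Γ) Δ
  | rP {Γ Δ} (i : ℕ) :
      DerJS Γ (FJS.box (FJS.atomS4 i) ::ₘ Δ) → DerJS Γ (FJS.atomIt i ::ₘ Δ)
  | lnegIt {Γ Δ β} :
      DerJS (FJS.box (FJS.negS4 β) ::ₘ Γ) Δ → DerJS (FJS.negIt β ::ₘ Γ) Δ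
  | rnegIt {Γ Δ β} :
      DerJS Γ (FJS.box (FJS.negS4 β) ::ₘ Δ) → DerJS Γ (FJS.negIt β ::ₘ Δ)
  | limpIt {Γ Δ β₁ β₂} :
      DerJS (FJS.box (FJS.impS4 β₁ β₂) ::ₘ Γ) Δ → DerJS (FJS.impIt β₁ β₂ ::ₘ Γ) Δ
  | rimpIt {Γ Δ β₁ β₂} :
      DerJS Γ (FJS.box (FJS.impS4 β₁ β₂) ::ₘ Δ) → DerJS Γ (FJS.impIt β₁ β₂ ::ₘ Δ)

/-- The Gödel translation of the combined language into the modal one: intuitionistic atoms,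
negations and implications are boxed, everything else is left in place. An intuitionistic atom and
the modal atom of the same index are sent to formulas over the same `p_i`, as in the rules `lP` and
`rP`. -/
def godel : FJS → FS4
  | FJS.atomIt i  => FS4.box (FS4.atom i)
  | FJS.atomS4 i  => FS4.atom i
  | FJS.bot       => FS4.bot
  | FJS.negIt φ   => FS4.box (FS4.neg (godel φ))
  | FJS.negS4 φ   => FS4.neg (godel φ)
  | FJS.box φ     => FS4.box (godel φ)
  | FJS.dia φ     => FS4.dia (godel φ)
  | FJS.and φ ψ   => FS4.and (godel φ) (godel ψ)
  | FJS.or φ ψ    => FS4.or (godel φ) (godel ψ)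
  | FJS.impIt φ ψ => FS4.box (FS4.imp (godel φ) (godel ψ))
  | FJS.impS4 φ ψ => FS4.imp (godel φ) (godel ψ)

theorem godel_iotaS4 (φ : FS4) : godel (iotaS4 φ) = φ := by
  induction φ <;> simp_all [iotaS4, godel]

theorem godel_map_box (Γ : Multiset FJS) :
    (Γ.map FJS.box).map godel = (Γ.map godel).map FS4.box := by
  simp [Multiset.map_map, Function.comp_def, godel]

theorem godel_map_dia (Γ : Multiset FJS) :
    (Γ.map FJS.dia).map godel = (Γ.map godel).map FS4.dia := by
  simp [Multiset.map_map, Function.comp_def, godel]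

theorem iotaS4_map_box (Γ : Multiset FS4) :
    (Γ.map FS4.box).map iotaS4 = (Γ.map iotaS4).map FJS.box := by
  simp [Multiset.map_map, Function.comp_def, iotaS4]

theorem iotaS4_map_dia (Γ : Multiset FS4) :
    (Γ.map FS4.dia).map iotaS4 = (Γ.map iotaS4).map FJS.dia := by
  simp [Multiset.map_map, Function.comp_def, iotaS4]

theorem godel_derivable {Γ Δ : Multiset FJS} (h : DerJS Γ Δ) :
    DerS4 (Γ.map godel) (Δ.map godel) := by
  induction h <;>
    simp only [Multiset.map_cons, Multiset.map_add, godel_map_box, godel_map_dia, godel] at *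
  case ax => exact .ax _ _ _
  case axBot => exact .axBot _ _
  case lnegS4 ih => exact .lneg ih
  case rnegS4 ih => exact .rneg ih
  case land ih => exact .land ih
  case rand ih₁ ih₂ => exact .rand ih₁ ih₂
  case lor ih₁ ih₂ => exact .lor ih₁ ih₂
  case ror ih => exact .ror ih
  case limpS4 ih₁ ih₂ => exact .limp ih₁ ih₂
  case rimpS4 ih => exact .rimp ih
  case lbox ih => exact .lbox ih
  case rbox ih => exact .rbox _ _ ih
  case ldia ih => exact .ldia _ _ ih
  case rdia ih => exact .rdia ih
  -- Premise and conclusion of an intuitionistic rule have the same translation.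
  all_goals assumption

theorem iotaS4_derivable {Γ Δ : Multiset FS4} (h : DerS4 Γ Δ) :
    DerJS (Γ.map iotaS4) (Δ.map iotaS4) := by
  induction h <;>
    simp only [Multiset.map_cons, Multiset.map_add, iotaS4_map_box, iotaS4_map_dia, iotaS4] at *
  case ax => exact .ax _ _ _
  case axBot => exact .axBot _ _
  case lneg ih => exact .lnegS4 ih
  case rneg ih => exact .rnegS4 ih
  case land ih => exact .land ih
  case rand ih₁ ih₂ => exact .rand ih₁ ih₂
  case lor ih₁ ih₂ => exact .lor ih₁ ih₂
  case ror ih => exact .ror ih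
  case limp ih₁ ih₂ => exact .limpS4 ih₁ ih₂
  case rimp ih => exact .rimpS4 ih
  case lbox ih => exact .lbox ih
  case rbox ih => exact .rbox _ _ ih
  case ldia ih => exact .ldia _ _ ih
  case rdia ih => exact .rdia ih

theorem JS_conservative_over_S4 (φ : FS4) :
    DerJS 0 {iotaS4 φ} ↔ DerS4 0 {φ} := by
  constructor
  · intro h
    simpa [godel_iotaS4] using godel_derivable h
  · intro h
    simpa using iotaS4_derivable h
end

section
/- The combined logic CJ is a conservative extension of Jaśkowski's paraconsistent logic J3: for every φ ∈ F_J3, the sequent ∅ → ι_J3(φ) is derivable in G_CJ if and only if the sequent ∅ → φ is derivable in G_J3. -/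
/-!
The two `PL`-connectives of CJ are definitional abbreviations: their left and right rules only
replace `¬^PL β` by `∼((∼β) → β)` and `β₁ →^PL β₂` by `((∼β₁) → β₁) → β₂`. Unfolding these
abbreviations gives a translation `unfoldPL : FCJ → FJ3` which is a left inverse of `iotaJ3`.
Under it every rule of G_CJ becomes either the corresponding rule of G_J3 or, for the four
`PL`-rules, the identity on sequents, so CJ-derivations map to J3-derivations
(`DerCJ.map_unfoldPL`). Conversely `iotaJ3` carries each rule of G_J3 to a rule of G_CJ
(`DerJ3.map_iotaJ3`). No cut elimination or semantics is needed.
-/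

/-- Formulas of Jaśkowski's paraconsistent logic J3. -/
inductive FJ3 : Type
  | atom : ℕ → FJ3
  | sneg : FJ3 → FJ3
  | and  : FJ3 → FJ3 → FJ3
  | or   : FJ3 → FJ3 → FJ3
  | imp  : FJ3 → FJ3 → FJ3

/-- Formulas of the combined logic CJ. -/
inductive FCJ : Type
  | atom  : ℕ → FCJ
  | sneg  : FCJ → FCJ
  | negPL : FCJ → FCJ
  | and   : FCJ → FCJ → FCJ
  | or    : FCJ → FCJ → FCJ
  | impJ3 : FCJ → FCJ → FCJ
  | impPL : FCJ → FCJ → FCJ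

/-- Embedding of J3 formulas into the combined language. -/
def iotaJ3 : FJ3 → FCJ
  | FJ3.atom i  => FCJ.atom i
  | FJ3.sneg φ  => FCJ.sneg (iotaJ3 φ)
  | FJ3.and φ ψ => FCJ.and (iotaJ3 φ) (iotaJ3 ψ)
  | FJ3.or φ ψ  => FCJ.or (iotaJ3 φ) (iotaJ3 ψ)
  | FJ3.imp φ ψ => FCJ.impJ3 (iotaJ3 φ) (iotaJ3 ψ)

/-- Derivability in the Gentzen calculus G_J3. -/
inductive DerJ3 : Multiset FJ3 → Multiset FJ3 → Prop
  | ax (i : ℕ) (Γ Δ : Multiset FJ3) : DerJ3 (FJ3.atom i ::ₘ Γ) (FJ3.atom i ::ₘ Δ)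
  | axS (i : ℕ) (Γ Δ : Multiset FJ3) :
      DerJ3 (FJ3.sneg (FJ3.atom i) ::ₘ Γ) (FJ3.sneg (FJ3.atom i) ::ₘ Δ)
  | axTS (i : ℕ) (Γ Δ : Multiset FJ3) :
      DerJ3 Γ (FJ3.atom i ::ₘ FJ3.sneg (FJ3.atom i) ::ₘ Δ)
  | limp {Γ Δ β₁ β₂} : DerJ3 (β₂ ::ₘ Γ) Δ → DerJ3 Γ (β₁ ::ₘ Δ) →
      DerJ3 (FJ3.imp β₁ β₂ ::ₘ Γ) Δ
  | rimp {Γ Δ β₁ β₂} : DerJ3 (β₁ ::ₘ Γ) (β₂ ::ₘ Δ) → DerJ3 Γ (FJ3.imp β₁ β₂ ::ₘ Δ)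
  | land {Γ Δ β₁ β₂} : DerJ3 (β₁ ::ₘ β₂ ::ₘ Γ) Δ → DerJ3 (FJ3.and β₁ β₂ ::ₘ Γ) Δ
  | rand {Γ Δ β₁ β₂} : DerJ3 Γ (β₁ ::ₘ Δ) → DerJ3 Γ (β₂ ::ₘ Δ) →
      DerJ3 Γ (FJ3.and β₁ β₂ ::ₘ Δ)
  | lor {Γ Δ β₁ β₂} : DerJ3 (β₁ ::ₘ Γ) Δ → DerJ3 (β₂ ::ₘ Γ) Δ →
      DerJ3 (FJ3.or β₁ β₂ ::ₘ Γ) Δ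
  | ror {Γ Δ β₁ β₂} : DerJ3 Γ (β₁ ::ₘ β₂ ::ₘ Δ) → DerJ3 Γ (FJ3.or β₁ β₂ ::ₘ Δ)
  | lss {Γ Δ β} : DerJ3 (β ::ₘ Γ) Δ → DerJ3 (FJ3.sneg (FJ3.sneg β) ::ₘ Γ) Δ
  | rss {Γ Δ β} : DerJ3 Γ (β ::ₘ Δ) → DerJ3 Γ (FJ3.sneg (FJ3.sneg β) ::ₘ Δ)
  | lsimp {Γ Δ β₁ β₂} : DerJ3 (β₁ ::ₘ FJ3.sneg β₂ ::ₘ Γ) Δ →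
      DerJ3 (FJ3.sneg (FJ3.imp β₁ β₂) ::ₘ Γ) Δ
  | rsimp {Γ Δ β₁ β₂} : DerJ3 Γ (β₁ ::ₘ Δ) → DerJ3 Γ (FJ3.sneg β₂ ::ₘ Δ) →
      DerJ3 Γ (FJ3.sneg (FJ3.imp β₁ β₂) ::ₘ Δ)
  | lsand {Γ Δ β₁ β₂} : DerJ3 (FJ3.sneg β₁ ::ₘ Γ) Δ → DerJ3 (FJ3.sneg β₂ ::ₘ Γ) Δ →
      DerJ3 (FJ3.sneg (FJ3.and β₁ β₂) ::ₘ Γ) Δ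
  | rsand {Γ Δ β₁ β₂} : DerJ3 Γ (FJ3.sneg β₁ ::ₘ FJ3.sneg β₂ ::ₘ Δ) →
      DerJ3 Γ (FJ3.sneg (FJ3.and β₁ β₂) ::ₘ Δ)
  | lsor {Γ Δ β₁ β₂} : DerJ3 (FJ3.sneg β₁ ::ₘ FJ3.sneg β₂ ::ₘ Γ) Δ →
      DerJ3 (FJ3.sneg (FJ3.or β₁ β₂) ::ₘ Γ) Δ
  | rsor {Γ Δ β₁ β₂} : DerJ3 Γ (FJ3.sneg β₁ ::ₘ Δ) → DerJ3 Γ (FJ3.sneg β₂ ::ₘ Δ) →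
      DerJ3 Γ (FJ3.sneg (FJ3.or β₁ β₂) ::ₘ Δ)

/-- Derivability in the Gentzen calculus G_CJ for the combined logic. -/
inductive DerCJ : Multiset FCJ → Multiset FCJ → Prop
  | ax (i : ℕ) (Γ Δ : Multiset FCJ) : DerCJ (FCJ.atom i ::ₘ Γ) (FCJ.atom i ::ₘ Δ)
  | axS (i : ℕ) (Γ Δ : Multiset FCJ) :
      DerCJ (FCJ.sneg (FCJ.atom i) ::ₘ Γ) (FCJ.sneg (FCJ.atom i) ::ₘ Δ)
  | axTS (i : ℕ) (Γ Δ : Multiset FCJ) :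
      DerCJ Γ (FCJ.atom i ::ₘ FCJ.sneg (FCJ.atom i) ::ₘ Δ)
  | limpJ3 {Γ Δ β₁ β₂} : DerCJ (β₂ ::ₘ Γ) Δ → DerCJ Γ (β₁ ::ₘ Δ) →
      DerCJ (FCJ.impJ3 β₁ β₂ ::ₘ Γ) Δ
  | rimpJ3 {Γ Δ β₁ β₂} : DerCJ (β₁ ::ₘ Γ) (β₂ ::ₘ Δ) → DerCJ Γ (FCJ.impJ3 β₁ β₂ ::ₘ Δ)
  | land {Γ Δ β₁ β₂} : DerCJ (β₁ ::ₘ β₂ ::ₘ Γ) Δ → DerCJ (FCJ.and β₁ β₂ ::ₘ Γ) Δ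
  | rand {Γ Δ β₁ β₂} : DerCJ Γ (β₁ ::ₘ Δ) → DerCJ Γ (β₂ ::ₘ Δ) →
      DerCJ Γ (FCJ.and β₁ β₂ ::ₘ Δ)
  | lor {Γ Δ β₁ β₂} : DerCJ (β₁ ::ₘ Γ) Δ → DerCJ (β₂ ::ₘ Γ) Δ →
      DerCJ (FCJ.or β₁ β₂ ::ₘ Γ) Δ
  | ror {Γ Δ β₁ β₂} : DerCJ Γ (β₁ ::ₘ β₂ ::ₘ Δ) → DerCJ Γ (FCJ.or β₁ β₂ ::ₘ Δ)
  | lss {Γ Δ β} : DerCJ (β ::ₘ Γ) Δ → DerCJ (FCJ.sneg (FCJ.sneg β) ::ₘ Γ) Δ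
  | rss {Γ Δ β} : DerCJ Γ (β ::ₘ Δ) → DerCJ Γ (FCJ.sneg (FCJ.sneg β) ::ₘ Δ)
  | lsimp {Γ Δ β₁ β₂} : DerCJ (β₁ ::ₘ FCJ.sneg β₂ ::ₘ Γ) Δ →
      DerCJ (FCJ.sneg (FCJ.impJ3 β₁ β₂) ::ₘ Γ) Δ
  | rsimp {Γ Δ β₁ β₂} : DerCJ Γ (β₁ ::ₘ Δ) → DerCJ Γ (FCJ.sneg β₂ ::ₘ Δ) →
      DerCJ Γ (FCJ.sneg (FCJ.impJ3 β₁ β₂) ::ₘ Δ)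
  | lsand {Γ Δ β₁ β₂} : DerCJ (FCJ.sneg β₁ ::ₘ Γ) Δ → DerCJ (FCJ.sneg β₂ ::ₘ Γ) Δ →
      DerCJ (FCJ.sneg (FCJ.and β₁ β₂) ::ₘ Γ) Δ
  | rsand {Γ Δ β₁ β₂} : DerCJ Γ (FCJ.sneg β₁ ::ₘ FCJ.sneg β₂ ::ₘ Δ) →
      DerCJ Γ (FCJ.sneg (FCJ.and β₁ β₂) ::ₘ Δ)
  | lsor {Γ Δ β₁ β₂} : DerCJ (FCJ.sneg β₁ ::ₘ FCJ.sneg β₂ ::ₘ Γ) Δ →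
      DerCJ (FCJ.sneg (FCJ.or β₁ β₂) ::ₘ Γ) Δ
  | rsor {Γ Δ β₁ β₂} : DerCJ Γ (FCJ.sneg β₁ ::ₘ Δ) → DerCJ Γ (FCJ.sneg β₂ ::ₘ Δ) →
      DerCJ Γ (FCJ.sneg (FCJ.or β₁ β₂) ::ₘ Δ)
  | lnegPL {Γ Δ β} :
      DerCJ (FCJ.sneg (FCJ.impJ3 (FCJ.sneg β) β) ::ₘ Γ) Δ →
      DerCJ (FCJ.negPL β ::ₘ Γ) Δ
  | rnegPL {Γ Δ β} :
      DerCJ Γ (FCJ.sneg (FCJ.impJ3 (FCJ.sneg β) β) ::ₘ Δ) →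
      DerCJ Γ (FCJ.negPL β ::ₘ Δ)
  | limpPL {Γ Δ β₁ β₂} :
      DerCJ (FCJ.impJ3 (FCJ.impJ3 (FCJ.sneg β₁) β₁) β₂ ::ₘ Γ) Δ →
      DerCJ (FCJ.impPL β₁ β₂ ::ₘ Γ) Δ
  | rimpPL {Γ Δ β₁ β₂} :
      DerCJ Γ (FCJ.impJ3 (FCJ.impJ3 (FCJ.sneg β₁) β₁) β₂ ::ₘ Δ) →
      DerCJ Γ (FCJ.impPL β₁ β₂ ::ₘ Δ)

/-- The translation of CJ-formulas into J3-formulas that unfolds the `PL`-connectives into the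
J3-formulas prescribed by their sequent rules and is homomorphic on everything else. -/
def unfoldPL : FCJ → FJ3
  | FCJ.atom i    => FJ3.atom i
  | FCJ.sneg φ    => FJ3.sneg (unfoldPL φ)
  | FCJ.negPL φ   => FJ3.sneg (FJ3.imp (FJ3.sneg (unfoldPL φ)) (unfoldPL φ))
  | FCJ.and φ ψ   => FJ3.and (unfoldPL φ) (unfoldPL ψ)
  | FCJ.or φ ψ    => FJ3.or (unfoldPL φ) (unfoldPL ψ)
  | FCJ.impJ3 φ ψ => FJ3.imp (unfoldPL φ) (unfoldPL ψ)
  | FCJ.impPL φ ψ =>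
      FJ3.imp (FJ3.imp (FJ3.sneg (unfoldPL φ)) (unfoldPL φ)) (unfoldPL ψ)

theorem unfoldPL_iotaJ3 (φ : FJ3) : unfoldPL (iotaJ3 φ) = φ := by
  induction φ <;> simp_all [iotaJ3, unfoldPL]

theorem DerJ3.map_iotaJ3 {Γ Δ : Multiset FJ3} (h : DerJ3 Γ Δ) :
    DerCJ (Γ.map iotaJ3) (Δ.map iotaJ3) := by
  induction h <;> simp only [Multiset.map_cons, iotaJ3] at *
  case ax => exact .ax _ _ _
  case axS => exact .axS _ _ _
  case axTS => exact .axTS _ _ _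
  case limp h₁ h₂ => exact .limpJ3 h₁ h₂
  case rimp h => exact .rimpJ3 h
  case land h => exact .land h
  case rand h₁ h₂ => exact .rand h₁ h₂
  case lor h₁ h₂ => exact .lor h₁ h₂
  case ror h => exact .ror h
  case lss h => exact .lss h
  case rss h => exact .rss h
  case lsimp h => exact .lsimp h
  case rsimp h₁ h₂ => exact .rsimp h₁ h₂
  case lsand h₁ h₂ => exact .lsand h₁ h₂
  case rsand h => exact .rsand h
  case lsor h => exact .lsor h
  case rsor h₁ h₂ => exact .rsor h₁ h₂

theorem DerCJ.map_unfoldPL {Γ Δ : Multiset FCJ} (h : DerCJ Γ Δ) :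
    DerJ3 (Γ.map unfoldPL) (Δ.map unfoldPL) := by
  induction h <;> simp only [Multiset.map_cons, unfoldPL] at *
  case ax => exact .ax _ _ _
  case axS => exact .axS _ _ _
  case axTS => exact .axTS _ _ _
  case limpJ3 h₁ h₂ => exact .limp h₁ h₂
  case rimpJ3 h => exact .rimp h
  case land h => exact .land h
  case rand h₁ h₂ => exact .rand h₁ h₂
  case lor h₁ h₂ => exact .lor h₁ h₂
  case ror h => exact .ror h
  case lss h => exact .lss h
  case rss h => exact .rss h
  case lsimp h => exact .lsimp h
  case rsimp h₁ h₂ => exact .rsimp h₁ h₂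
  case lsand h₁ h₂ => exact .lsand h₁ h₂
  case rsand h => exact .rsand h
  case lsor h => exact .lsor h
  case rsor h₁ h₂ => exact .rsor h₁ h₂
  -- Premise and conclusion of a `PL`-rule unfold to the same sequent.
  all_goals assumption

theorem CJ_conservative_over_J3 (φ : FJ3) :
    DerCJ 0 {iotaJ3 φ} ↔ DerJ3 0 {φ} := by
  constructor
  · intro h
    simpa [unfoldPL_iotaJ3] using h.map_unfoldPL
  · intro h
    simpa using h.map_iotaJ3
end

section
/- Let v : ℕ → {0,1} be an assignment of classical truth values to atoms, let V'' be its classical extension to F_PL, and let V' be the J3 extension of v (viewing 0 and 1 as elements of {0, 1/2, 1}). Then for every φ ∈ F_PL: V''(φ) = 1 if and only if V'(τ(φ)) ∈ {1/2, 1}. -/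
/-!
On the two classical values, the map `a ↦ (∼a → a)` is the identity, so under `u = boolToTV3 ∘ v`
every `tauJ3 φ` takes a classical value, namely the one classical logic gives to `φ`
(`evalJ3_tauJ3`). The value `1/2` never occurs, and being designated means being `1`.
-/

/-- Classical formulas (atoms, negation, implication). -/
inductive FPL : Type
  | atom : ℕ → FPL
  | neg  : FPL → FPL
  | imp  : FPL → FPL → FPL

/-- The translation from classical logic into J3. -/
def tauJ3 : FPL → FJ3
  | FPL.atom i  => FJ3.atom i
  | FPL.neg φ   => FJ3.sneg (FJ3.imp (FJ3.sneg (tauJ3 φ)) (tauJ3 φ))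
  | FPL.imp φ ψ => FJ3.imp (FJ3.imp (FJ3.sneg (tauJ3 φ)) (tauJ3 φ)) (tauJ3 ψ)

/-- The three truth values 0, 1/2, 1 of J3. -/
inductive TV3 : Type
  | zero : TV3
  | half : TV3
  | one  : TV3
  deriving DecidableEq

/-- Numeric rank of a J3 truth value (used only to compare truth values). -/
def TV3.toNat : TV3 → ℕ
  | TV3.zero => 0
  | TV3.half => 1
  | TV3.one  => 2

/-- J3 negation: ∼v = 1 − v. -/
def TV3.negv : TV3 → TV3
  | TV3.zero => TV3.one
  | TV3.half => TV3.half
  | TV3.one  => TV3.zero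

/-- J3 conjunction: min. -/
def TV3.minv (a b : TV3) : TV3 := if a.toNat ≤ b.toNat then a else b

/-- J3 disjunction: max. -/
def TV3.maxv (a b : TV3) : TV3 := if a.toNat ≤ b.toNat then b else a

/-- J3 implication. -/
def TV3.impv (a b : TV3) : TV3 :=
  if a.toNat ≤ b.toNat then TV3.one
  else if a = TV3.one ∧ b = TV3.zero then TV3.zero
  else TV3.half

/-- Classical valuation extending an atom assignment (`true` is 1, `false` is 0). -/
def evalPL (v : ℕ → Bool) : FPL → Bool
  | FPL.atom i  => v i
  | FPL.neg φ   => ! evalPL v φ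
  | FPL.imp φ ψ => ! evalPL v φ || evalPL v ψ

/-- J3 valuation extending an atom assignment. -/
def evalJ3 (u : ℕ → TV3) : FJ3 → TV3
  | FJ3.atom i  => u i
  | FJ3.sneg φ  => (evalJ3 u φ).negv
  | FJ3.and φ ψ => (evalJ3 u φ).minv (evalJ3 u ψ)
  | FJ3.or φ ψ  => (evalJ3 u φ).maxv (evalJ3 u ψ)
  | FJ3.imp φ ψ => (evalJ3 u φ).impv (evalJ3 u ψ)

/-- Viewing a classical truth value as a J3 truth value. -/
def boolToTV3 (b : Bool) : TV3 := if b then TV3.one else TV3.zero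

theorem evalJ3_tauJ3 (v : ℕ → Bool) (φ : FPL) :
    evalJ3 (fun i => boolToTV3 (v i)) (tauJ3 φ) = boolToTV3 (evalPL v φ) := by
  induction φ with
  | atom i => rfl
  | neg φ ih =>
    simp only [tauJ3, evalJ3, evalPL, ih]
    cases evalPL v φ <;> rfl
  | imp φ ψ ihφ ihψ =>
    simp only [tauJ3, evalJ3, evalPL, ihφ, ihψ]
    cases evalPL v φ <;> cases evalPL v ψ <;> rfl

theorem evalPL_iff_evalJ3_tau_of_classical (v : ℕ → Bool) (φ : FPL) :
    evalPL v φ = true ↔ evalJ3 (fun i => boolToTV3 (v i)) (tauJ3 φ) ≠ TV3.zero := by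
  rw [evalJ3_tauJ3]
  cases evalPL v φ <;> simp [boolToTV3]
end

section
/- Let u : ℕ → {0, 1/2, 1} be an assignment of J3 truth values to atoms, let V' be its J3 extension to F_J3, define v : ℕ → {0,1} by v(p) = 1 if u(p) ∈ {1/2, 1} and v(p) = 0 otherwise, and let V'' be the classical extension of v to F_PL. Then for every φ ∈ F_PL: V''(φ) = 1 if and only if V'(τ(φ)) ∈ {1/2, 1}. -/
/-- The formula `∼A → A` is two-valued and detects whether `A` is designated. -/
theorem TV3.impv_negv_self (a : TV3) :
    a.negv.impv a = if a = TV3.zero then TV3.zero else TV3.one := by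
  cases a <;> decide

theorem TV3.negv_impv_negv_self_ne_zero (a : TV3) :
    (a.negv.impv a).negv ≠ TV3.zero ↔ a = TV3.zero := by
  rw [TV3.impv_negv_self]
  cases a <;> decide

theorem TV3.impv_negv_self_impv_ne_zero (a b : TV3) :
    (a.negv.impv a).impv b ≠ TV3.zero ↔ a = TV3.zero ∨ b ≠ TV3.zero := by
  rw [TV3.impv_negv_self]
  cases a <;> cases b <;> decide

theorem evalPL_iff_evalJ3_tau_of_J3 (u : ℕ → TV3) (φ : FPL) :
    evalPL (fun i => decide (u i ≠ TV3.zero)) φ = true ↔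
      evalJ3 u (tauJ3 φ) ≠ TV3.zero := by
  induction φ with
  | atom i => simp [evalPL, tauJ3, evalJ3]
  | neg φ ih =>
    rw [tauJ3, evalJ3, evalJ3, evalJ3, TV3.negv_impv_negv_self_ne_zero, evalPL,
      Bool.not_eq_true', ← Bool.not_eq_true, ih, not_not]
  | imp φ ψ ihφ ihψ =>
    rw [tauJ3, evalJ3, evalJ3, evalJ3, TV3.impv_negv_self_impv_ne_zero, evalPL,
      Bool.or_eq_true, Bool.not_eq_true', ← Bool.not_eq_true, ihφ, ihψ, not_not]
end

section
/- A formula φ ∈ F_PL is a classical tautology (V''(φ) = 1 for every classical valuation V'') if and only if τ(φ) is valid in J3 (V'(τ(φ)) ∈ {1/2, 1} for every J3 valuation V'); hence the translation τ : F_PL → F_J3 is a conservative translation at the level of validity. -/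
/-- Collapsing the designated values `1/2` and `1` to `true` turns the J3 value of `tauJ3 φ` into
the classical value of `φ` under the collapsed assignment. -/
theorem decide_evalJ3_tauJ3 (u : ℕ → TV3) (φ : FPL) :
    decide (evalJ3 u (tauJ3 φ) ≠ TV3.zero) = evalPL (fun i => decide (u i ≠ TV3.zero)) φ := by
  induction φ with
  | atom i => rfl
  | neg φ ih =>
    simp only [tauJ3, evalJ3, evalPL, ← ih]
    cases evalJ3 u (tauJ3 φ) <;> rfl
  | imp φ ψ ih₁ ih₂ =>
    simp only [tauJ3, evalJ3, evalPL, ← ih₁, ← ih₂]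
    cases evalJ3 u (tauJ3 φ) <;> cases evalJ3 u (tauJ3 ψ) <;> rfl

theorem decide_boolToTV3 (b : Bool) : decide (boolToTV3 b ≠ TV3.zero) = b := by
  cases b <;> rfl

theorem tauJ3_conservative_validity (φ : FPL) :
    (∀ v : ℕ → Bool, evalPL v φ = true) ↔
      (∀ u : ℕ → TV3, evalJ3 u (tauJ3 φ) ≠ TV3.zero) := by
  constructor
  · intro h u
    exact of_decide_eq_true ((decide_evalJ3_tauJ3 u φ).trans (h _))
  · intro h v
    have key := decide_evalJ3_tauJ3 (fun i => boolToTV3 (v i)) φ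
    simp only [decide_boolToTV3] at key
    exact key.symm.trans (decide_eq_true (h _))
end
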